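/- Let k ≥ 1 and let v = (v₁,…,v_k) ∈ ℝ^k satisfy 0 ≤ v₁ ≤ ⋯ ≤ v_k ≤ 1, with mean v̄ = (1/k)Σᵢvᵢ, median v_med (equal to v_{(k+1)/2} if k is odd and to (v_{k/2} + v_{k/2+1})/2 if k is even), jumps jᵢ = 1/2 + v̄ − v_{k+1−i} (1 ≤ i ≤ k), and gaps δᵢ = v_{i+1} − vᵢ (1 ≤ i ≤ k−1). Define γ(x) = (#{i : vᵢ + x − v̄ > 1/2})/k and PG = ∫_ℝ |γ(x) + γ(1−x) − 1| dx. Then the following are equivalent: (1) PG = 0; (2) jᵢ + j_{k+1−i} = 1 for all 1 ≤ i ≤ k; (3) (vᵢ + v_{k+1−i})/2 = v̄ for all 1 ≤ i ≤ k; (4) (vᵢ + v_{k+1−i})/2 = v_med for all 1 ≤ i ≤ k; (5) δᵢ = δ_{k−i} for all 1 ≤ i ≤ k−1. -/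

import Mathlib

open MeasureTheory

/-! The curve `γ` jumps by `1 / k` at each `jᵢ`, and its reflection about `(1/2, 1/2)` at each
`1 - jᵢ`. Both sequences of jumps are sorted once the second is reversed, so at every `x` the sets
of indices whose jump has been passed are nested, and the area between the two curves is the sum of
the horizontal distances between matched jumps: `PG = (1/k) ∑ᵢ |jᵢ + j_{k+1-i} - 1|`. So `PG = 0`
says that the midpoints `(vᵢ + v_{k+1-i}) / 2` all equal `v̄`. The mean of these midpoints is `v̄`,
the median is the midpoint of a middle pair, and equality of opposite gaps says that consecutive
midpoints agree. -/

namespace PartisanSymmetry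

open scoped Finset

section CountingFunctions

open scoped symmDiff

variable {ι : Type*} [LinearOrder ι]

lemma abs_card_sub_card_eq_card_symmDiff {s t : Finset ι}
    (hs : IsLowerSet (s : Set ι)) (ht : IsLowerSet (t : Set ι)) :
    |(#s : ℝ) - #t| = #(s ∆ t) := by
  wlog hst : s ⊆ t generalizing s t
  · rw [abs_sub_comm, symmDiff_comm]
    exact this ht hs (Finset.coe_subset.mp ((hs.total ht).resolve_left (by simpa using hst)))
  · rw [symmDiff_of_le hst, Finset.card_sdiff_of_subset hst,
      Nat.cast_sub (Finset.card_le_card hst), abs_sub_comm, abs_of_nonneg]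
    exact sub_nonneg.mpr (Nat.cast_le.mpr (Finset.card_le_card hst))

lemma volume_symmDiff_Ioi_Ici (a b : ℝ) :
    volume (Set.Ioi a ∆ Set.Ici b) = ENNReal.ofReal |a - b| := by
  have huIoc : Set.Ioi a ∆ Set.Ioi b = Set.uIoc a b := by
    rw [Set.symmDiff_def, Set.Ioi_sdiff_Ioi, Set.Ioi_sdiff_Ioi, Set.uIoc_eq_union]
  calc volume (Set.Ioi a ∆ Set.Ici b)
      = volume (Set.Ioi a ∆ Set.Ioi b) :=
        measure_congr ((ae_eq_refl _).symmDiff Ioi_ae_eq_Ici.symm)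
    _ = ENNReal.ofReal |a - b| := by rw [huIoc, Real.volume_uIoc, abs_sub_comm]

variable [Fintype ι]

lemma abs_card_lt_sub_card_le_eq_sum_indicator {a b : ι → ℝ} (ha : Monotone a) (hb : Monotone b)
    (x : ℝ) :
    |(#{i | a i < x} : ℝ) - #{i | b i ≤ x}| =
      ∑ i, (Set.Ioi (a i) ∆ Set.Ici (b i)).indicator 1 x := by
  classical
  rw [abs_card_sub_card_eq_card_symmDiff
    (fun i i' hi h ↦ by simpa using (ha hi).trans_lt (by simpa using h))
    (fun i i' hi h ↦ by simpa using (hb hi).trans (by simpa using h))]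
  simp only [Set.indicator_apply, Pi.one_apply, Finset.sum_boole]
  congr 2
  ext i
  simp [Finset.mem_symmDiff, Set.mem_symmDiff]

theorem integral_abs_card_lt_sub_card_le {a b : ι → ℝ} (ha : Monotone a) (hb : Monotone b) :
    ∫ x, |(#{i | a i < x} : ℝ) - #{i | b i ≤ x}| = ∑ i, |a i - b i| := by
  have hmeas (i : ι) : MeasurableSet (Set.Ioi (a i) ∆ Set.Ici (b i)) :=
    measurableSet_Ioi.symmDiff measurableSet_Ici
  have hvol (i : ι) := volume_symmDiff_Ioi_Ici (a i) (b i)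
  simp_rw [abs_card_lt_sub_card_le_eq_sum_indicator ha hb]
  rw [integral_finsetSum _ fun i _ ↦ (integrable_indicator_iff (hmeas i)).mpr
    (integrableOn_const (by simp [hvol]))]
  simp_rw [integral_indicator_one (hmeas _), measureReal_def, hvol,
    ENNReal.toReal_ofReal (abs_nonneg _)]

end CountingFunctions

section PartisanGini

variable {k : ℕ}

/-- The jumps `jᵢ = 1/2 + c - v_{k+1-i}` of the seats-votes curve of `v` with average share `c`. -/
noncomputable def jump (v : Fin k → ℝ) (c : ℝ) (i : Fin k) : ℝ := 1 / 2 + c - v i.rev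

/-- The seats-votes curve of `v` under linear uniform partisan swing: the fraction of districts won
when the average share moves from `c` to `x`. -/
noncomputable def seatsVotesCurve (v : Fin k → ℝ) (c x : ℝ) : ℝ :=
  (Nat.card {i : Fin k // v i + x - c > 1 / 2} : ℝ) / k

/-- The partisan Gini score: the area between the seats-votes curve and its reflection about
`(1/2, 1/2)`. -/
noncomputable def partisanGini (v : Fin k → ℝ) (c : ℝ) : ℝ :=
  ∫ x, |seatsVotesCurve v c x + seatsVotesCurve v c (1 - x) - 1|

lemma monotone_jump {v : Fin k → ℝ} (hv : Monotone v) (c : ℝ) : Monotone (jump v c) :=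
  fun _ _ h ↦ sub_le_sub_left (hv (Fin.rev_le_rev.mpr h)) _

lemma card_filter_rev (p : Fin k → Prop) [DecidablePred p] :
    #{i : Fin k | p i.rev} = #{i | p i} :=
  Finset.card_equiv Fin.revPerm (by simp)

lemma seatsVotesCurve_eq_card_jump_lt (v : Fin k → ℝ) (c x : ℝ) :
    seatsVotesCurve v c x = (#{i | jump v c i < x} : ℝ) / k := by
  rw [seatsVotesCurve, Nat.card_eq_fintype_card, Fintype.card_subtype, ← card_filter_rev]
  congr! 4 with i
  rw [jump]
  constructor <;> intro h <;> linarith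

lemma card_lt_sub_eq_sub_card_sub_rev_le (a : Fin k → ℝ) (c x : ℝ) :
    (#{i | a i < c - x} : ℝ) = k - #{i : Fin k | c - a i.rev ≤ x} := by
  have hcompl := Finset.card_filter_add_card_filter_not (s := Finset.univ) (a · < c - x)
  simp only [not_lt, Finset.card_univ, Fintype.card_fin] at hcompl
  simp only [eq_sub_iff_add_eq, sub_le_comm (b := a _), card_filter_rev (c - x ≤ a ·)]
  exact_mod_cast hcompl

theorem integral_abs_card_lt_add_card_lt_sub {a : Fin k → ℝ} (ha : Monotone a) (c : ℝ) :
    ∫ x, |(#{i | a i < x} : ℝ) + #{i | a i < c - x} - k| =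
      ∑ i, |a i + a i.rev - c| := by
  have hb : Monotone fun i : Fin k ↦ c - a i.rev :=
    fun _ _ h ↦ sub_le_sub_left (ha (Fin.rev_le_rev.mpr h)) c
  simp_rw [card_lt_sub_eq_sub_card_sub_rev_le, add_sub_assoc, sub_sub_cancel_left,
    ← sub_eq_add_neg, integral_abs_card_lt_sub_card_le ha hb, sub_sub_eq_add_sub, add_sub_assoc]

theorem partisanGini_eq_sum_abs_jump [NeZero k] {v : Fin k → ℝ} (hv : Monotone v) (c : ℝ) :
    partisanGini v c = (∑ i, |jump v c i + jump v c i.rev - 1|) / k := by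
  have hk : (k : ℝ) ≠ 0 := NeZero.ne _
  rw [← integral_abs_card_lt_add_card_lt_sub (monotone_jump hv c), ← integral_div]
  refine integral_congr_ae (.of_forall fun x ↦ ?_)
  simp only [seatsVotesCurve_eq_card_jump_lt]
  rw [← add_div, div_sub_one hk, abs_div, Nat.abs_cast]

theorem partisanGini_eq_zero_iff [NeZero k] {v : Fin k → ℝ} (hv : Monotone v) (c : ℝ) :
    partisanGini v c = 0 ↔ ∀ i, jump v c i + jump v c i.rev - 1 = 0 := by
  rw [partisanGini_eq_sum_abs_jump hv, div_eq_zero_iff, or_iff_left (NeZero.ne (k : ℝ)),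
    Finset.sum_eq_zero_iff_of_nonneg fun _ _ ↦ abs_nonneg _]
  simp only [Finset.mem_univ, true_implies, abs_eq_zero]

end PartisanGini

section SymmetricVectors

variable {K : Type*} [Field K] {k n : ℕ}

/-- A vector is symmetric about `c` if each pair of opposite entries has midpoint `c`. -/
def IsSymmAbout (v : Fin k → K) (c : K) : Prop := ∀ i, (v i + v i.rev) / 2 = c

lemma isSymmAbout_iff_jump {v : Fin k → ℝ} {c : ℝ} :
    IsSymmAbout v c ↔ ∀ i, jump v c i + jump v c i.rev - 1 = 0 := by
  refine forall_congr' fun i ↦ ?_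
  rw [jump, jump, Fin.rev_rev]
  constructor <;> intro h <;> linarith

variable [NeZero (2 : K)]

lemma IsSymmAbout.mean_eq [NeZero (k : K)] {v : Fin k → K} {c : K} (h : IsSymmAbout v c) :
    (∑ i, v i) / k = c := by
  have hrev : ∑ i : Fin k, v i.rev = ∑ i, v i := Equiv.sum_comp Fin.revPerm v
  rw [div_eq_iff (NeZero.ne (k : K))]
  calc ∑ i, v i = ∑ i, (v i + v i.rev) / 2 := by
        rw [← Finset.sum_div, Finset.sum_add_distrib, hrev, add_self_div_two]
    _ = c * k := by simp [h _, mul_comm]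

lemma IsSymmAbout.median_eq [NeZero k] {v : Fin k → K} {c m : K} (h : IsSymmAbout v c)
    (hm : if k % 2 = 1 then m = v ⟨(k - 1) / 2, by have := NeZero.pos k; omega⟩
      else m = (v ⟨k / 2 - 1, by have := NeZero.pos k; omega⟩ +
        v ⟨k / 2, by have := NeZero.pos k; omega⟩) / 2) :
    m = c := by
  have hk := NeZero.pos k
  split_ifs at hm with hodd
  · have hrev : (⟨(k - 1) / 2, by omega⟩ : Fin k).rev = ⟨(k - 1) / 2, by omega⟩ := by
      ext; simp only [Fin.val_rev]; omega
    rw [hm, ← h ⟨(k - 1) / 2, by omega⟩, hrev, add_self_div_two]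
  · have hrev : (⟨k / 2 - 1, by omega⟩ : Fin k).rev = ⟨k / 2, by omega⟩ := by
      ext; simp only [Fin.val_rev]; omega
    rw [hm, ← h ⟨k / 2 - 1, by omega⟩, hrev]

lemma exists_isSymmAbout_iff_gap_eq_gap_rev {v : Fin (n + 1) → K} :
    (∃ c, IsSymmAbout v c) ↔
      ∀ i : Fin n, v i.succ - v i.castSucc = v i.rev.succ - v i.rev.castSucc := by
  have hstep (i : Fin n) : (v i.succ + v i.succ.rev) / 2 = (v i.castSucc + v i.castSucc.rev) / 2 ↔
      v i.succ - v i.castSucc = v i.rev.succ - v i.rev.castSucc := by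
    rw [div_left_inj' two_ne_zero, Fin.rev_succ, Fin.rev_castSucc, sub_eq_sub_iff_add_eq_add,
      add_comm (v i.rev.succ)]
  simp_rw [← hstep]
  refine ⟨fun ⟨c, h⟩ i ↦ (h _).trans (h _).symm, fun h ↦ ⟨(v 0 + v (Fin.rev 0)) / 2, fun i ↦ ?_⟩⟩
  induction i using Fin.induction with
  | zero => rfl
  | succ i ih => exact (h i).trans ih

end SymmetricVectors

end PartisanSymmetry

open PartisanSymmetry in
theorem partisan_symmetry_characterization_general
    (k : ℕ) [NeZero k] (v : Fin k → ℝ) (hmono : Monotone v)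
    (vbar : ℝ) (hvbar : vbar = (∑ i, v i) / k)
    (vmed : ℝ)
    (hvmed : if k % 2 = 1 then vmed = v ⟨(k - 1) / 2, by have := NeZero.pos k; omega⟩
      else vmed = (v ⟨k / 2 - 1, by have := NeZero.pos k; omega⟩ +
        v ⟨k / 2, by have := NeZero.pos k; omega⟩) / 2)
    (γ : ℝ → ℝ)
    (hγ : ∀ x, γ x = (Nat.card {i : Fin k // v i + x - vbar > 1 / 2} : ℝ) / k)
    (PG : ℝ) (hPG : PG = ∫ x : ℝ, |γ x + γ (1 - x) - 1|)
    (j : Fin k → ℝ) (hj : ∀ i, j i = 1 / 2 + vbar - v i.rev)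
    (δ : Fin (k - 1) → ℝ)
    (hδ : ∀ i : Fin (k - 1),
      δ i = v ⟨i.val + 1, by have := i.isLt; omega⟩ - v ⟨i.val, by have := i.isLt; omega⟩) :
    [PG = 0,
     ∀ i : Fin k, j i + j i.rev - 1 = 0,
     ∀ i : Fin k, (v i + v i.rev) / 2 = vbar,
     ∀ i : Fin k, (v i + v i.rev) / 2 = vmed,
     ∀ i : Fin (k - 1), δ i = δ i.rev].TFAE := by
  obtain ⟨n, rfl⟩ := Nat.exists_eq_succ_of_ne_zero (NeZero.ne k)
  obtain rfl : γ = seatsVotesCurve v vbar := funext hγ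
  obtain rfl : j = jump v vbar := funext hj
  have gap_symm_iff : (∀ i, δ i = δ i.rev) ↔ ∃ c, IsSymmAbout v c := by
    simp_rw [hδ]
    exact exists_isSymmAbout_iff_gap_eq_gap_rev.symm
  tfae_have 1 ↔ 2 := hPG ▸ partisanGini_eq_zero_iff hmono vbar
  tfae_have 2 ↔ 3 := isSymmAbout_iff_jump.symm
  tfae_have 3 → 4 := fun (h : IsSymmAbout v vbar) ↦ (h.median_eq hvmed).symm ▸ h
  tfae_have 4 → 5 := fun h ↦ gap_symm_iff.mpr ⟨vmed, h⟩
  tfae_have 5 → 3 := fun h ↦ by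
    obtain ⟨c, hc⟩ := gap_symm_iff.mp h
    exact (hvbar.trans hc.mean_eq) ▸ hc
  tfae_finish

/-- Partisan Symmetry Characterization: with
`PG = ∫_ℝ |γ(x) + γ(1−x) − 1| dx` for the seats-votes curve `γ` under uniform
partisan swing, jumps `jᵢ = 1/2 + v̄ − v_{k+1−i}` and gaps `δᵢ = v_{i+1} − vᵢ`,
the following are equivalent:
(1) `PG = 0`; (2) `jᵢ + j_{k+1−i} = 1` for all `i`; (3) `(vᵢ + v_{k+1−i})/2 = v̄` for all `i`;
(4) `(vᵢ + v_{k+1−i})/2 = v_med` for all `i`; (5) `δᵢ = δ_{k−i}` for all `i`. -/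
theorem partisan_symmetry_characterization
    (k : ℕ) (hk : 1 ≤ k) (v : Fin k → ℝ)
    (hmono : Monotone v) (h0 : ∀ i, 0 ≤ v i) (h1 : ∀ i, v i ≤ 1)
    (vbar : ℝ) (hvbar : vbar = (∑ i, v i) / k)
    (vmed : ℝ)
    (hvmed : if k % 2 = 1 then vmed = v ⟨(k - 1) / 2, by omega⟩
      else vmed = (v ⟨k / 2 - 1, by omega⟩ + v ⟨k / 2, by omega⟩) / 2)
    (γ : ℝ → ℝ)
    (hγ : ∀ x, γ x = (Nat.card {i : Fin k // v i + x - vbar > 1 / 2} : ℝ) / k)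
    (PG : ℝ) (hPG : PG = ∫ x : ℝ, |γ x + γ (1 - x) - 1|)
    (j : Fin k → ℝ) (hj : ∀ i, j i = 1 / 2 + vbar - v i.rev)
    (δ : Fin (k - 1) → ℝ)
    (hδ : ∀ i : Fin (k - 1),
      δ i = v ⟨i.val + 1, by have := i.isLt; omega⟩ - v ⟨i.val, by have := i.isLt; omega⟩) :
    [PG = 0,
     ∀ i : Fin k, j i + j i.rev - 1 = 0,
     ∀ i : Fin k, (v i + v i.rev) / 2 = vbar,
     ∀ i : Fin k, (v i + v i.rev) / 2 = vmed,
     ∀ i : Fin (k - 1), δ i = δ i.rev].TFAE := by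
  have : NeZero k := ⟨Nat.one_le_iff_ne_zero.mp hk⟩
  exact partisan_symmetry_characterization_general k v hmono vbar hvbar vmed hvmed γ hγ PG hPG j
    hj δ hδ
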